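/- For n ≥ 3, among all n-vertex unicyclic graphs whose m segments are all of length 1 (so n = m), the graph U^1_n obtained by attaching one pendant vertex to each of two vertices of a triangle and n - 5 pendant vertices to the third vertex maximizes the Merrifield–Simmons index: σ(U^1_n) ≥ σ(G) for any unicyclic graph G on n vertices with n segments. -/

import Mathlib

open SimpleGraph

/-- A subtree of `G` is a nonempty connected acyclic subgraph of `G`. -/
def IsSubtree {V : Type*} {G : SimpleGraph V} (H : G.Subgraph) : Prop :=
  H.Connected ∧ H.coe.IsAcyclic

/-- `nk G k` : the number of subtrees of `G` with exactly `k` vertices. -/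
noncomputable def nk {V : Type*} (G : SimpleGraph V) (k : ℕ) : ℕ :=
  Nat.card {H : G.Subgraph // IsSubtree H ∧ H.verts.ncard = k}

/-- number of `k`-vertex subtrees of `G` containing the vertex `v`. -/
noncomputable def nkAt {V : Type*} (G : SimpleGraph V) (v : V) (k : ℕ) : ℕ :=
  Nat.card {H : G.Subgraph // IsSubtree H ∧ v ∈ H.verts ∧ H.verts.ncard = k}

/-- `nT G` : total number of subtrees of `G`, counting the empty subtree once. -/
noncomputable def nT {V : Type*} (G : SimpleGraph V) : ℕ :=
  1 + Nat.card {H : G.Subgraph // IsSubtree H}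

/-- number of subtrees of `G` containing the vertex `v`. -/
noncomputable def nAt {V : Type*} (G : SimpleGraph V) (v : V) : ℕ :=
  Nat.card {H : G.Subgraph // IsSubtree H ∧ v ∈ H.verts}

/-- the path on `n` vertices `0 - 1 - ⋯ - (n-1)`. -/
def pathG (n : ℕ) : SimpleGraph (Fin n) :=
  SimpleGraph.fromRel (fun u v => v.val = u.val + 1)

/-- the cycle on `n` vertices. -/
def cycG (n : ℕ) : SimpleGraph (Fin n) :=
  SimpleGraph.fromRel (fun u v => v.val = u.val + 1 ∨ (u.val = 0 ∧ v.val + 1 = n))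

/-- the star on `n` vertices with center `0`. -/
def starG (n : ℕ) : SimpleGraph (Fin n) :=
  SimpleGraph.fromRel (fun u _ => u.val = 0)

/-- `USnl n l` : the cycle `C_l` (on `0,…,l-1`) with `n - l` pendant vertices attached
to the vertex `0`. -/
def USnl (n l : ℕ) : SimpleGraph (Fin n) :=
  SimpleGraph.fromRel (fun u v =>
    (v.val = u.val + 1 ∧ v.val < l) ∨ (u.val = 0 ∧ v.val + 1 = l) ∨ (u.val = 0 ∧ l ≤ v.val))

/-- `UPnl n l` : the cycle `C_l` (on `0,…,l-1`) with a pendant path of length `n - l`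
attached to the vertex `l-1`. -/
def UPnl (n l : ℕ) : SimpleGraph (Fin n) :=
  SimpleGraph.fromRel (fun u v => v.val = u.val + 1 ∨ (u.val = 0 ∧ v.val + 1 = l))

/-- `US_n` : the star `S_n` together with an edge joining two of its leaves. -/
def USn (n : ℕ) : SimpleGraph (Fin n) := USnl n 3

/-- `UP_n` : a triangle with a pendant path, obtained by identifying a vertex of `C_3`
with an end of `P_{n-2}`. -/
def UPn (n : ℕ) : SimpleGraph (Fin n) := UPnl n 3

/-- the Merrifield–Simmons index: the number of independent vertex subsets
(including the empty set). -/
noncomputable def sigmaG {V : Type*} (G : SimpleGraph V) : ℕ :=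
  Nat.card {s : Set V // ∀ u ∈ s, ∀ v ∈ s, ¬ G.Adj u v}

/-- the Hosoya index: the number of matchings (including the empty one). -/
noncomputable def hosoya {V : Type*} (G : SimpleGraph V) : ℕ :=
  Nat.card {s : Set (Sym2 V) // s ⊆ G.edgeSet ∧
    s.Pairwise (fun e f => ∀ v, ¬(v ∈ e ∧ v ∈ f))}

/-- the Wiener index: the sum of the distances over all unordered pairs of vertices. -/
noncomputable def wiener {V : Type*} [Fintype V] (G : SimpleGraph V) : ℕ :=
  (∑ u : V, ∑ v : V, G.dist u v) / 2

/-- `U¹_n` : a triangle on `0, 1, 2`, a pendant vertex `3` attached to `0`, a pendant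
vertex `4` attached to `1`, and `n - 5` pendant vertices `5,…,n-1` attached to `2`. -/
def U1n (n : ℕ) : SimpleGraph (Fin n) :=
  SimpleGraph.fromRel (fun u v =>
    (u.val = 0 ∧ (v.val = 1 ∨ v.val = 2 ∨ v.val = 3)) ∨
    (u.val = 1 ∧ (v.val = 2 ∨ v.val = 4)) ∨
    (u.val = 2 ∧ 5 ≤ v.val))

open Classical in
/-- the independent subsets of `S`. -/
noncomputable def indF {V : Type*} (G : SimpleGraph V) (S : Finset V) : Finset (Finset V) :=
  S.powerset.filter (fun s => ∀ u ∈ s, ∀ v ∈ s, ¬ G.Adj u v)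

/-- the number of independent subsets of `S`. -/
noncomputable def ind {V : Type*} (G : SimpleGraph V) (S : Finset V) : ℕ := (indF G S).card

section
variable {V : Type*} [DecidableEq V] {G : SimpleGraph V}

lemma mem_indF {S s : Finset V} :
    s ∈ indF G S ↔ s ⊆ S ∧ ∀ u ∈ s, ∀ v ∈ s, ¬ G.Adj u v := by
  simp [indF]

lemma ind_mono {S T : Finset V} (h : S ⊆ T) : ind G S ≤ ind G T := by
  apply Finset.card_le_card
  intro s hs
  rw [mem_indF] at hs ⊢
  exact ⟨hs.1.trans h, hs.2⟩

lemma ind_insert_le {S R : Finset V} {v : V}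
    (hR : ∀ u ∈ S, ¬ G.Adj v u → u ∈ R) : ind G (insert v S) ≤ ind G S + ind G R := by
  have hsub : indF G (insert v S) ⊆ indF G S ∪ (indF G R).image (insert v) := by
    intro s hs
    rw [mem_indF] at hs
    obtain ⟨h1, h2⟩ := hs
    rw [Finset.mem_union, Finset.mem_image]
    by_cases hv : v ∈ s
    · right
      refine ⟨s.erase v, ?_, Finset.insert_erase hv⟩
      rw [mem_indF]
      refine ⟨?_, fun a ha b hb => h2 a (Finset.mem_of_mem_erase ha) b (Finset.mem_of_mem_erase hb)⟩
      intro u hu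
      have hus := Finset.mem_of_mem_erase hu
      have hne := Finset.ne_of_mem_erase hu
      have := h1 hus
      rw [Finset.mem_insert] at this
      exact hR u (this.resolve_left hne) (h2 v hv u hus)
    · left
      rw [mem_indF]
      refine ⟨fun u hu => ?_, h2⟩
      have := h1 hu
      rw [Finset.mem_insert] at this
      exact this.resolve_left (fun h => hv (h ▸ hu))
  calc ind G (insert v S) ≤ _ := Finset.card_le_card hsub
    _ ≤ _ := Finset.card_union_le _ _
    _ ≤ _ := Nat.add_le_add_left Finset.card_image_le _

lemma le_ind_insert {S R : Finset V} {v : V} (hv : v ∉ S) (hRS : R ⊆ S)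
    (hR : ∀ u ∈ R, ¬ G.Adj v u) : ind G S + ind G R ≤ ind G (insert v S) := by
  have hsub : indF G S ∪ (indF G R).image (insert v) ⊆ indF G (insert v S) := by
    intro s hs
    rw [Finset.mem_union, Finset.mem_image] at hs
    rcases hs with hs | ⟨t, ht, rfl⟩
    · rw [mem_indF] at hs ⊢
      exact ⟨hs.1.trans (Finset.subset_insert _ _), hs.2⟩
    · rw [mem_indF] at ht ⊢
      refine ⟨Finset.insert_subset_insert _ (ht.1.trans hRS), ?_⟩
      intro a ha b hb
      rw [Finset.mem_insert] at ha hb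
      rcases ha with rfl | ha <;> rcases hb with rfl | hb
      · exact G.loopless.irrefl _
      · exact hR b (ht.1 hb)
      · exact fun h => hR a (ht.1 ha) h.symm
      · exact ht.2 a ha b hb
  have hd : Disjoint (indF G S) ((indF G R).image (insert v)) := by
    rw [Finset.disjoint_left]
    intro s hs hs'
    rw [Finset.mem_image] at hs'
    obtain ⟨t, ht, rfl⟩ := hs'
    rw [mem_indF] at hs
    exact hv (hs.1 (Finset.mem_insert_self _ _))
  have hi : ((indF G R).image (insert v)).card = (indF G R).card := by
    apply Finset.card_image_of_injOn
    intro s hs t ht hst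
    have hs := (mem_indF.1 hs).1
    have ht := (mem_indF.1 ht).1
    have h1 : v ∉ s := fun h => hv (hRS (hs h))
    have h2 : v ∉ t := fun h => hv (hRS (ht h))
    have := congrArg (fun x => Finset.erase x v) hst
    simpa [Finset.erase_insert h1, Finset.erase_insert h2] using this
  calc ind G S + ind G R = (indF G S ∪ (indF G R).image (insert v)).card := by
        rw [Finset.card_union_of_disjoint hd, hi]; rfl
    _ ≤ _ := Finset.card_le_card hsub

lemma ind_le_pow (S : Finset V) : ind G S ≤ 2 ^ S.card := by
  rw [← Finset.card_powerset]
  exact Finset.card_le_card (fun s hs => Finset.mem_powerset.2 (mem_indF.1 hs).1)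

lemma ind_eq_pow {S : Finset V} (h : ∀ u ∈ S, ∀ v ∈ S, ¬ G.Adj u v) : ind G S = 2 ^ S.card := by
  rw [← Finset.card_powerset]
  unfold ind
  congr 1
  ext s
  rw [mem_indF, Finset.mem_powerset]
  exact ⟨fun h => h.1, fun hs => ⟨hs, fun a ha b hb => h a (hs ha) b (hs hb)⟩⟩

lemma ind_insert_two (S : Finset V) (v : V) : ind G (insert v S) ≤ 2 * ind G S := by
  have := ind_insert_le (G := G) (S := S) (R := S) (v := v) (fun u hu _ => hu)
  omega

lemma ind_union_le (S D : Finset V) : ind G (D ∪ S) ≤ 2 ^ D.card * ind G S := by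
  induction D using Finset.induction_on with
  | empty => simp
  | insert d D hd ih =>
    rw [Finset.insert_union, Finset.card_insert_of_notMem hd, pow_succ]
    have := ind_insert_two (G := G) (D ∪ S) d
    nlinarith

lemma ind_superset_le {S T : Finset V} (h : S ⊆ T) :
    2 ^ S.card * ind G T ≤ 2 ^ T.card * ind G S := by
  have h1 := ind_union_le (G := G) S (T \ S)
  rw [Finset.sdiff_union_of_subset h] at h1
  have h2 := Finset.card_sdiff_add_card_eq_card h
  rw [← h2, pow_add]
  calc _ ≤ 2 ^ S.card * (2 ^ (T \ S).card * ind G S) := Nat.mul_le_mul_left _ h1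
    _ = _ := by ring

lemma ind_edge {a b : V} (h : G.Adj a b) : ind G {a, b} ≤ 3 := by
  have h1 := ind_insert_le (G := G) (S := {b}) (R := ∅) (v := a) (by
    intro u hu hn; simp at hu; subst hu; exact absurd h hn)
  have h2 := ind_le_pow (G := G) {b}
  have h3 := ind_le_pow (G := G) ∅
  simp at h2 h3
  omega

lemma ind_P4 {a b c d : V} (hab : G.Adj a b) (hbc : G.Adj b c) (hcd : G.Adj c d) :
    ind G {a, b, c, d} ≤ 8 := by
  have h1 := ind_insert_le (G := G) (S := {b, c, d}) (R := {c, d}) (v := a) (by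
    intro u hu hn; simp at hu ⊢; rcases hu with rfl | hu
    · exact absurd hab hn
    · exact hu)
  have h2 := ind_insert_le (G := G) (S := {c, d}) (R := {d}) (v := b) (by
    intro u hu hn; simp at hu ⊢; rcases hu with rfl | hu
    · exact absurd hbc hn
    · exact hu)
  have h3 := ind_edge hcd
  have h4 := ind_le_pow (G := G) {d}
  simp at h4
  omega

lemma ind_P4_superset {a b c d : V} (hab : G.Adj a b) (hbc : G.Adj b c) (hcd : G.Adj c d)
    (hnd : [a, b, c, d].Nodup) {S : Finset V} (hS : {a, b, c, d} ⊆ S) :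
    2 * ind G S ≤ 2 ^ S.card := by
  have h1 := ind_superset_le (G := G) hS
  have h2 := ind_P4 hab hbc hcd
  have h3 : ({a, b, c, d} : Finset V).card = 4 := by
    have := List.toFinset_card_of_nodup hnd
    simpa using this
  rw [h3] at h1
  nlinarith [Nat.mul_le_mul_left (2 ^ S.card) h2]

lemma ind_grow [Fintype V] (hconn : G.Connected) (B : Finset V) (hne : B.Nonempty)
    (hB : 4 * ind G B ≤ 2 ^ B.card + 16)
    (hE : ∀ S : Finset V, B ⊆ S → ∀ u ∈ S, 4 * ind G (S.erase u) ≤ 2 ^ S.card) :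
    4 * ind G Finset.univ ≤ 2 ^ Fintype.card V + 16 := by
  classical
  obtain ⟨S, hS, hmax⟩ := Finset.exists_max_image
    (Finset.univ.filter (fun S : Finset V => B ⊆ S ∧ 4 * ind G S ≤ 2 ^ S.card + 16))
    Finset.card ⟨B, by simp [hB]⟩
  simp only [Finset.mem_filter, Finset.mem_univ, true_and] at hS hmax
  by_cases hU : S = Finset.univ
  · subst hU; simpa using hS.2
  exfalso
  obtain ⟨w, hw⟩ : ∃ w, w ∉ S := by
    by_contra h; push Not at h; exact hU (Finset.eq_univ_of_forall h)
  obtain ⟨b, hb⟩ := hne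
  obtain ⟨p⟩ := hconn.preconnected b w
  obtain ⟨d, -, h1, h2⟩ := p.exists_boundary_dart (S : Set V) (by exact_mod_cast hS.1 hb)
    (by exact_mod_cast hw)
  have h1 : d.fst ∈ S := by exact_mod_cast h1
  have h2 : d.snd ∉ S := by exact_mod_cast h2
  have hadj := d.adj
  have h3 := ind_insert_le (G := G) (S := S) (R := S.erase d.fst) (v := d.snd) (by
    intro u hu hn
    rw [Finset.mem_erase]
    refine ⟨?_, hu⟩
    rintro rfl
    exact hn hadj.symm)
  have h4 := hE S hS.1 _ h1
  have h5 := hmax (insert d.snd S) ⟨hS.1.trans (Finset.subset_insert _ _), by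
    rw [Finset.card_insert_of_notMem h2, pow_succ]
    have := hS.2
    omega⟩
  rw [Finset.card_insert_of_notMem h2] at h5
  omega

lemma ind_two_P4 {B : Finset V}
    (hP : ∀ u, ∃ a b c d, G.Adj a b ∧ G.Adj b c ∧ G.Adj c d ∧ [a, b, c, d].Nodup ∧
      u ∉ ({a, b, c, d} : Finset V) ∧ {a, b, c, d} ⊆ B)
    (S : Finset V) (hBS : B ⊆ S) (u : V) (hu : u ∈ S) : 4 * ind G (S.erase u) ≤ 2 ^ S.card := by
  obtain ⟨a, b, c, d, h1, h2, h3, h4, h5, h6⟩ := hP u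
  have := ind_P4_superset h1 h2 h3 h4 (S := S.erase u) (by
    intro x hx
    rw [Finset.mem_erase]
    exact ⟨fun h => h5 (h ▸ hx), hBS (h6 hx)⟩)
  rw [← Finset.card_erase_add_one hu, pow_succ]
  omega

lemma net_bound [Fintype V] (hconn : G.Connected) {x0 x1 x2 y0 y1 y2 : V}
    (h01 : G.Adj x0 x1) (h12 : G.Adj x1 x2) (h02 : G.Adj x0 x2)
    (k0 : G.Adj x0 y0) (k1 : G.Adj x1 y1) (k2 : G.Adj x2 y2)
    (hnd : [x0, x1, x2, y0, y1, y2].Nodup) :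
    6 ≤ Fintype.card V ∧ 4 * ind G Finset.univ ≤ 2 ^ Fintype.card V + 16 := by
  have hc : ({x0, x1, x2, y0, y1, y2} : Finset V).card = 6 := by
    simpa using List.toFinset_card_of_nodup hnd
  refine ⟨hc ▸ Finset.card_le_univ _, ?_⟩
  refine ind_grow hconn {x0, x1, x2, y0, y1, y2} ⟨x0, by simp⟩ ?_ (ind_two_P4 ?_)
  · rw [hc]
    have e1 := ind_insert_le (G := G) (S := {x1, x2, y0, y1, y2}) (R := {y1, y2}) (v := x0) (by
      intro u hu hn; grind)
    have e2 : ({x1, x2, y0, y1, y2} : Finset V) = insert y0 {y1, x1, x2, y2} := by grind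
    have e3 := ind_insert_two (G := G) {y1, x1, x2, y2} y0
    have e4 := ind_P4 k1.symm h12 k2
    have e5 := ind_le_pow (G := G) {y1, y2}
    have e6 : ({y1, y2} : Finset V).card ≤ 2 := Finset.card_le_two
    have e7 : 2 ^ ({y1, y2} : Finset V).card ≤ 2 ^ 2 := Nat.pow_le_pow_right (by norm_num) e6
    rw [e2] at e1
    rw [e2]
    omega
  · intro u
    by_cases hu0 : u = x0 ∨ u = y0
    · refine ⟨y1, x1, x2, y2, k1.symm, h12, k2, ?_, ?_, ?_⟩ <;> grind
    by_cases hu1 : u = x1 ∨ u = y1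
    · refine ⟨y0, x0, x2, y2, k0.symm, h02, k2, ?_, ?_, ?_⟩ <;> grind
    · refine ⟨y0, x0, x1, y1, k0.symm, h01, k1, ?_, ?_, ?_⟩ <;> grind

lemma comb_bound [Fintype V] (hconn : G.Connected) {x0 x1 x2 x3 y0 y1 y2 y3 : V}
    (h01 : G.Adj x0 x1) (h12 : G.Adj x1 x2) (h23 : G.Adj x2 x3)
    (k0 : G.Adj x0 y0) (k1 : G.Adj x1 y1) (k2 : G.Adj x2 y2) (k3 : G.Adj x3 y3)
    (hnd : [x0, x1, x2, x3, y0, y1, y2, y3].Nodup) :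
    6 ≤ Fintype.card V ∧ 4 * ind G Finset.univ ≤ 2 ^ Fintype.card V + 16 := by
  have hc : ({x0, x1, x2, x3, y0, y1, y2, y3} : Finset V).card = 8 := by
    simpa using List.toFinset_card_of_nodup hnd
  refine ⟨le_trans (by omega) (hc ▸ Finset.card_le_univ _), ?_⟩
  refine ind_grow hconn {x0, x1, x2, x3, y0, y1, y2, y3} ⟨x0, by simp⟩ ?_ (ind_two_P4 ?_)
  · rw [hc]
    have e0 : ({x0, x1, x2, x3, y0, y1, y2, y3} : Finset V) =
      insert x1 (insert y0 (insert x0 (insert y1 {y2, x2, x3, y3}))) := by grind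
    have e1 := ind_insert_le (G := G) (S := insert y0 (insert x0 (insert y1 {y2, x2, x3, y3})))
      (R := insert y0 (insert y2 {x3, y3})) (v := x1) (by
      intro u hu hn
      have := h01.symm
      simp at hu ⊢; grind)
    have e2 := ind_insert_le (G := G) (S := insert x0 (insert y1 {y2, x2, x3, y3}))
      (R := insert y1 {y2, x2, x3, y3}) (v := y0) (by
      intro u hu hn
      have := k0.symm
      simp at hu ⊢; grind)
    have e3 := ind_insert_two (G := G) (insert y1 {y2, x2, x3, y3}) x0
    have e4 := ind_insert_two (G := G) {y2, x2, x3, y3} y1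
    have e5 := ind_P4 k2.symm h23 k3
    have e6 := ind_insert_two (G := G) (insert y2 {x3, y3}) y0
    have e7 := ind_insert_two (G := G) {x3, y3} y2
    have e8 := ind_edge k3
    rw [e0]
    omega
  · intro u
    by_cases hu0 : u = x0 ∨ u = y0 ∨ u = x1 ∨ u = y1
    · refine ⟨y2, x2, x3, y3, k2.symm, h23, k3, ?_, ?_, ?_⟩ <;> grind
    · refine ⟨y0, x0, x1, y1, k0.symm, h01, k1, ?_, ?_, ?_⟩ <;> grind

/-- non-backtracking walks in a forest have distinct vertices -/
lemma nb3 {T : SimpleGraph V} (hT : T.IsAcyclic) {a b c d : V}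
    (hab : T.Adj a b) (hbc : T.Adj b c) (hcd : T.Adj c d) (h1 : a ≠ c) (h2 : b ≠ d) :
    [a, b, c, d].Nodup := by
  have := (hT.isPath_iff_isChain (Walk.cons hab (Walk.cons hbc (Walk.cons hcd Walk.nil)))).2 (by
    simp [hab.ne, hbc.ne, hcd.ne, h1, h2])
  rw [Walk.isPath_def] at this
  simpa using this

lemma nb4 {T : SimpleGraph V} (hT : T.IsAcyclic) {a b c d e : V}
    (hab : T.Adj a b) (hbc : T.Adj b c) (hcd : T.Adj c d) (hde : T.Adj d e)
    (h1 : a ≠ c) (h2 : b ≠ d) (h3 : c ≠ e) :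
    [a, b, c, d, e].Nodup := by
  have := (hT.isPath_iff_isChain
    (Walk.cons hab (Walk.cons hbc (Walk.cons hcd (Walk.cons hde Walk.nil))))).2 (by
    simp [hab.ne, hbc.ne, hcd.ne, hde.ne, h1, h2, h3])
  rw [Walk.isPath_def] at this
  simpa using this

lemma nb5 {T : SimpleGraph V} (hT : T.IsAcyclic) {a b c d e f : V}
    (hab : T.Adj a b) (hbc : T.Adj b c) (hcd : T.Adj c d) (hde : T.Adj d e) (hef : T.Adj e f)
    (h1 : a ≠ c) (h2 : b ≠ d) (h3 : c ≠ e) (h4 : d ≠ f) :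
    [a, b, c, d, e, f].Nodup := by
  have := (hT.isPath_iff_isChain
    (Walk.cons hab (Walk.cons hbc (Walk.cons hcd (Walk.cons hde (Walk.cons hef Walk.nil)))))).2 (by
    simp [hab.ne, hbc.ne, hcd.ne, hde.ne, hef.ne, h1, h2, h3, h4])
  rw [Walk.isPath_def] at this
  simpa using this

lemma third [Fintype V]
    (hseg : ∀ u v, G.Adj u v → (G.neighborSet u).ncard ≠ 2 ∧ (G.neighborSet v).ncard ≠ 2)
    {v p q : V} (hp : G.Adj v p) (hq : G.Adj v q) (hpq : p ≠ q) (r s : V) :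
    ∃ y, G.Adj v y ∧ y ≠ r ∧ y ≠ s := by
  by_contra h
  push Not at h
  have hsub : G.neighborSet v ⊆ {r, s} := by
    intro y hy
    by_cases hr : y = r
    · left; exact hr
    · right; exact h y hy hr
  have h1 : (G.neighborSet v).ncard ≤ 2 :=
    (Set.ncard_le_ncard hsub (Set.toFinite _)).trans (by
      have := Set.ncard_insert_le r {s}; simpa using this)
  have h2 : ({p, q} : Set V).ncard ≤ (G.neighborSet v).ncard := by
    apply Set.ncard_le_ncard _ (Set.toFinite _)
    rintro y (rfl | rfl)
    · exact hp
    · exact hq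
  rw [Set.ncard_pair hpq] at h2
  exact (hseg v p hp).1 (le_antisymm h1 h2)

lemma main_bound [Fintype V] (hconn : G.Connected) (hedges : G.edgeSet.ncard = Fintype.card V)
    (hseg : ∀ u v, G.Adj u v → (G.neighborSet u).ncard ≠ 2 ∧ (G.neighborSet v).ncard ≠ 2) :
    6 ≤ Fintype.card V ∧ 4 * ind G Finset.univ ≤ 2 ^ Fintype.card V + 16 := by
  have hnac : ¬ G.IsAcyclic := by
    intro h
    have := (isTree_iff_connected_and_card.1 ⟨hconn, h⟩).2
    rw [Nat.card_coe_set_eq, hedges, Nat.card_eq_fintype_card] at this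
    omega
  rw [isAcyclic_iff_forall_adj_isBridge] at hnac
  push Not at hnac
  obtain ⟨a, b, hab, hbr⟩ := hnac
  obtain ⟨T, hTdef⟩ : ∃ T, T = G.deleteEdges {s(a, b)} := ⟨_, rfl⟩
  have hTc : T.Connected := by
    have := hconn.connected_delete_edge_of_not_isBridge hbr
    simpa [hTdef] using this
  have hT : T.IsAcyclic := by
    refine (isTree_iff_connected_and_card.2 ⟨hTc, ?_⟩).isAcyclic
    rw [Nat.card_coe_set_eq, Nat.card_eq_fintype_card, ← hedges, hTdef, edgeSet_deleteEdges]
    exact Set.ncard_sdiff_singleton_add_one hab (Set.toFinite _)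
  have hTG : ∀ u v, T.Adj u v → G.Adj u v := by
    intro u v h; rw [hTdef, deleteEdges_adj] at h; exact h.1
  have hGT : ∀ u v, G.Adj u v → (u = a → v ≠ b) → (u = b → v ≠ a) → T.Adj u v := by
    intro u v h h1 h2
    rw [hTdef, deleteEdges_adj]
    refine ⟨h, ?_⟩
    simp only [Set.mem_singleton_iff, Sym2.eq_iff]
    rintro (⟨h3, h4⟩ | ⟨h3, h4⟩)
    · exact h1 h3 h4
    · exact h2 h3 h4
  have hnT : ¬ T.Adj a b := by
    rw [hTdef, deleteEdges_adj]; simp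
  obtain ⟨p, hp⟩ := (hTc.preconnected a b).exists_isPath
  cases p with
  | nil => exact absurd hab (G.loopless.irrefl _)
  | @cons _ x1 _ h01 p =>
  cases p with
  | nil => exact absurd h01 hnT
  | @cons _ x2 _ h12 p =>
  cases p with
  | nil =>
    have hx : a ≠ b := hab.ne
    obtain ⟨y0, g0, n01, n02⟩ := third hseg (hTG _ _ h01) hab h12.ne x1 b
    obtain ⟨y1, g1, n11, n12⟩ := third hseg (hTG _ _ h01).symm (hTG _ _ h12) hx a b
    obtain ⟨y2, g2, n21, n22⟩ := third hseg (hTG _ _ h12).symm hab.symm h01.ne.symm x1 a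
    have t0 := hGT _ _ g0 (fun _ => n02) (fun h => absurd h hx)
    have t1 := hGT _ _ g1 (fun h => absurd h h01.ne.symm) (fun h => absurd h h12.ne)
    have t2 := hGT _ _ g2 (fun h => absurd h hx.symm) (fun _ => n22)
    have d1 := nb4 hT t0.symm h01 h12 t2 n01 hx n21.symm
    have d2 := nb3 hT t0.symm h01 t1 n01 n11.symm
    have d3 := nb3 hT t1.symm h12 t2 n12 n21.symm
    exact net_bound hconn (hTG _ _ h01) (hTG _ _ h12) hab g0 g1 g2 (by clear * - d1 d2 d3; grind)
  | @cons _ x3 _ h23 p =>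
    rw [Walk.isPath_def] at hp
    have hb1 : b ∈ p.support := p.end_mem_support
    have hb3 : x3 ∈ p.support := p.start_mem_support
    simp only [Walk.support_cons, List.nodup_cons, List.mem_cons, not_or] at hp
    obtain ⟨⟨a1, a2, a3⟩, ⟨b1, b2⟩, c1, hp⟩ := hp
    have hx1b : x1 ≠ b := fun h => b2 (h ▸ hb1)
    have hx2b : x2 ≠ b := fun h => c1 (h ▸ hb1)
    have hax3 : a ≠ x3 := fun h => a3 (h ▸ hb3)
    have hx13 : x1 ≠ x3 := fun h => b2 (h ▸ hb3)
    obtain ⟨z, gz, hz⟩ : ∃ z, G.Adj x3 z ∧ x2 ≠ z := by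
      cases p with
      | nil => exact ⟨a, hab.symm, fun h => a2 h.symm⟩
      | @cons _ x4 _ h34 p =>
        refine ⟨x4, hTG _ _ h34, ?_⟩
        rintro rfl
        exact c1 (by simp)
    obtain ⟨y0, g0, n01, n02⟩ := third hseg (hTG _ _ h01) hab hx1b x1 b
    obtain ⟨y1, g1, n11, n12⟩ := third hseg (hTG _ _ h01).symm (hTG _ _ h12) a2 a x2
    obtain ⟨y2, g2, n21, n22⟩ := third hseg (hTG _ _ h12).symm (hTG _ _ h23) hx13 x1 x3
    obtain ⟨y3, g3, n31, n32⟩ := third hseg (hTG _ _ h23).symm gz hz x2 a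
    have t0 := hGT _ _ g0 (fun _ => n02) (fun h => absurd h hab.ne)
    have t1 := hGT _ _ g1 (fun h => absurd h h01.ne.symm) (fun h => absurd h hx1b)
    have t2 := hGT _ _ g2 (fun h => absurd h.symm a2) (fun h => absurd h hx2b)
    have t3 := hGT _ _ g3 (fun h => absurd h.symm hax3) (fun _ => n32)
    have d1 := nb5 hT t0.symm h01 h12 h23 t3 n01 a2 hx13 n31.symm
    have d2 := nb3 hT t0.symm h01 t1 n01 n11.symm
    have d3 := nb4 hT t0.symm h01 h12 t2 n01 a2 n21.symm
    have d4 := nb4 hT t1.symm h12 h23 t3 n12 hx13 n31.symm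
    have d5 := nb3 hT t1.symm h12 t2 n12 n21.symm
    have d6 := nb3 hT t2.symm h23 t3 n22 n31.symm
    exact comb_bound hconn (hTG _ _ h01) (hTG _ _ h12) (hTG _ _ h23) g0 g1 g2 g3
      (by clear * - d1 d2 d3 d4 d5 d6; grind)

lemma sigmaG_eq [Fintype V] (G : SimpleGraph V) : sigmaG G = ind G Finset.univ := by
  classical
  unfold sigmaG ind
  rw [← Nat.card_eq_finsetCard]
  refine Nat.card_congr ⟨fun s => ⟨s.1.toFinset, ?_⟩, fun s => ⟨(s.1 : Set V), ?_⟩, ?_, ?_⟩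
  · rw [mem_indF]
    refine ⟨Finset.subset_univ _, ?_⟩
    simpa using s.2
  · have := (mem_indF.1 s.2).2
    simpa using this
  · intro s; simp
  · intro s; simp

end

lemma U1n_lower (n : ℕ) (hn : 6 ≤ n) : 2 ^ n + 16 ≤ 4 * ind (U1n n) Finset.univ := by
  let v : (k : ℕ) → k < 6 → Fin n := fun k hk => ⟨k, by omega⟩
  let a := v 0 (by omega)
  let b := v 1 (by omega)
  let c := v 2 (by omega)
  let d := v 3 (by omega)
  let e := v 4 (by omega)
  let U : Finset (Fin n) := Finset.univ
  have hadj : ∀ x y : Fin n, (U1n n).Adj x y ↔ x ≠ y ∧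
      (((x.val = 0 ∧ (y.val = 1 ∨ y.val = 2 ∨ y.val = 3)) ∨
      (x.val = 1 ∧ (y.val = 2 ∨ y.val = 4)) ∨ (x.val = 2 ∧ 5 ≤ y.val)) ∨
      ((y.val = 0 ∧ (x.val = 1 ∨ x.val = 2 ∨ x.val = 3)) ∨
      (y.val = 1 ∧ (x.val = 2 ∨ x.val = 4)) ∨ (y.val = 2 ∧ 5 ≤ x.val))) := by
    intro x y; unfold U1n; rw [SimpleGraph.fromRel_adj]
  have hc : ((U.erase c).erase a).erase b = ((U.erase c).erase a).erase b := rfl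
  let S1 := U.erase c
  let S2 := S1.erase a
  let S3 := S2.erase b
  have m1 : ∀ x : Fin n, x ∈ S1 ↔ x.val ≠ 2 := by
    intro x; simp [S1, U, c, v, Fin.ext_iff]
  have m2 : ∀ x : Fin n, x ∈ S2 ↔ x.val ≠ 0 ∧ x.val ≠ 2 := by
    intro x; simp [S2, m1, a, v, Fin.ext_iff]
  have m3 : ∀ x : Fin n, x ∈ S3 ↔ x.val ≠ 1 ∧ x.val ≠ 0 ∧ x.val ≠ 2 := by
    intro x; simp [S3, m2, b, v, Fin.ext_iff]
  have c1 : S1.card + 1 = n := by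
    have := Finset.card_erase_add_one (Finset.mem_univ c)
    simpa [S1, U] using this
  have c2 : S2.card + 1 = S1.card := Finset.card_erase_add_one ((m1 _).2 (by simp [a, v]))
  have c3 : S3.card + 1 = S2.card := Finset.card_erase_add_one ((m2 _).2 (by simp [b, v]))
  have c4 : (S3.erase d).card + 1 = S3.card :=
    Finset.card_erase_add_one ((m3 _).2 (by simp [d, v]))
  have c5 : (S3.erase e).card + 1 = S3.card :=
    Finset.card_erase_add_one ((m3 _).2 (by simp [e, v]))
  have hind : ∀ x ∈ S3, ∀ y ∈ S3, ¬ (U1n n).Adj x y := by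
    intro x hx y hy
    rw [m3] at hx hy
    rw [hadj]
    omega
  have i3 := ind_eq_pow hind
  have i4 := ind_eq_pow (G := U1n n) (S := S3.erase d) (fun x hx y hy =>
    hind x (Finset.mem_of_mem_erase hx) y (Finset.mem_of_mem_erase hy))
  have i5 := ind_eq_pow (G := U1n n) (S := S3.erase e) (fun x hx y hy =>
    hind x (Finset.mem_of_mem_erase hx) y (Finset.mem_of_mem_erase hy))
  have i6 := ind_eq_pow (G := U1n n) (S := {d, e}) (by
    intro x hx y hy
    apply hind
    · rw [m3]; simp [d, e, v] at hx; rcases hx with rfl | rfl <;> simp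
    · rw [m3]; simp [d, e, v] at hy; rcases hy with rfl | rfl <;> simp)
  have c6 : ({d, e} : Finset (Fin n)).card = 2 := Finset.card_pair (by simp [d, e, v])
  have j2 := le_ind_insert (G := U1n n) (S := S3) (R := S3.erase e) (v := b) (by simp [m3, b, v])
    (Finset.erase_subset _ _) (by
      intro x hx
      rw [Finset.mem_erase, m3] at hx
      rw [hadj]
      simp [b, e, v, Fin.ext_iff] at hx ⊢
      omega)
  have j1 := le_ind_insert (G := U1n n) (S := S2) (R := S3.erase d) (v := a) (by simp [m2, a, v])
    ((Finset.erase_subset _ _).trans (Finset.erase_subset _ _)) (by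
      intro x hx
      rw [Finset.mem_erase, m3] at hx
      rw [hadj]
      simp [a, d, v, Fin.ext_iff] at hx ⊢
      omega)
  have j0 := le_ind_insert (G := U1n n) (S := S1) (R := {d, e}) (v := c) (by simp [m1, c, v])
    (by intro x hx; rw [m1]; simp [d, e, v] at hx; rcases hx with rfl | rfl <;> simp) (by
      intro x hx
      rw [hadj]
      simp [d, e, v] at hx
      rcases hx with rfl | rfl <;> simp [c, v])
  have k2 : insert b S3 = S2 := Finset.insert_erase ((m2 _).2 (by simp [b, v]))
  have k1 : insert a S2 = S1 := Finset.insert_erase ((m1 _).2 (by simp [a, v]))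
  have k0 : insert c S1 = Finset.univ := Finset.insert_erase (Finset.mem_univ _)
  rw [k2] at j2
  rw [k1] at j1
  rw [k0] at j0
  obtain ⟨t, ht⟩ : ∃ t, (S3.erase d).card = t := ⟨_, rfl⟩
  have q3 : S3.card = t + 1 := by omega
  have q5 : (S3.erase e).card = t := by omega
  have qn : n = t + 4 := by omega
  rw [q3] at i3
  rw [ht] at i4
  rw [q5] at i5
  rw [c6] at i6
  have e1 : 2 ^ (t + 1) = 2 * 2 ^ t := by ring
  have e2 : 2 ^ n = 16 * 2 ^ t := by rw [qn]; ring
  omega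

/-- among `n`-vertex unicyclic graphs all of whose segments have
length `1` (i.e. every edge joins two vertices of degree `≠ 2`), the graph `U¹_n`
maximizes the Merrifield–Simmons index. -/
theorem sigma_all_short_segments (n : ℕ) (hn : 3 ≤ n) (G : SimpleGraph (Fin n))
    (hconn : G.Connected) (hedges : G.edgeSet.ncard = n)
    (hseg : ∀ u v, G.Adj u v →
      (G.neighborSet u).ncard ≠ 2 ∧ (G.neighborSet v).ncard ≠ 2) :
    sigmaG G ≤ sigmaG (U1n n) := by 
  have h := main_bound hconn (by simpa using hedges) hseg
  rw [Fintype.card_fin] at h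
  have h2 := U1n_lower n h.1
  rw [sigmaG_eq, sigmaG_eq]
  omega
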